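/- arXiv:2501.08692 — 3 statements merged into one kernel-verified Lean document; each statement's English description precedes it below -/
import Mathlib

section
/- Let G be a finite abelian group and let p₁, …, p_k be elements of the complex group algebra ℂ[G]. The ideal I of ℂ[G] generated by {p₁, …, p_k} is a proper ideal (I ≠ ℂ[G]) if and only if there exists a group homomorphism μ : G → ℂˣ such that μ̂(p_i) = 0 for all i = 1, …, k, where μ̂ : ℂ[G] → ℂ is the ℂ-algebra homomorphism extending μ (i.e., μ̂(∑_{g∈G} λ_g g) = ∑_{g∈G} λ_g μ(g)). -/
/-- Let `G` be a finite abelian group and `p₁, …, p_k`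
elements of the complex group algebra `ℂ[G]`.  The ideal generated by the
`pᵢ` is proper if and only if there is a homomorphism `μ : G → ℂˣ` whose
`ℂ`-algebra extension `μ̂ : ℂ[G] → ℂ` kills every `pᵢ`. -/
theorem stmt2 {G : Type*} [CommGroup G] [Finite G] (k : ℕ)
    (p : Fin k → MonoidAlgebra ℂ G) :
    Ideal.span (Set.range p) ≠ ⊤ ↔
      ∃ μ : G →* ℂˣ, ∀ i : Fin k,
        (MonoidAlgebra.lift ℂ ℂ G) ((Units.coeHom ℂ).comp μ) (p i) = 0 := by
  constructor
  · intro h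
    obtain ⟨M, hM, hle⟩ := Ideal.exists_le_maximal _ h
    have : Module.Finite ℂ (MonoidAlgebra ℂ G) := inferInstance
    have : Module.Finite ℂ (MonoidAlgebra ℂ G ⧸ M) := inferInstance
    have hb : Function.Bijective (algebraMap ℂ (MonoidAlgebra ℂ G ⧸ M)) :=
      IsAlgClosed.algebraMap_bijective_of_isIntegral
    let e := AlgEquiv.ofBijective (Algebra.ofId ℂ (MonoidAlgebra ℂ G ⧸ M)) hb
    let φ : MonoidAlgebra ℂ G →ₐ[ℂ] ℂ :=
      (e.symm : (MonoidAlgebra ℂ G ⧸ M) →ₐ[ℂ] ℂ).comp (Ideal.Quotient.mkₐ ℂ M)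
    refine ⟨((MonoidAlgebra.lift ℂ ℂ G).symm φ).toHomUnits, fun i => ?_⟩
    have h1 : (Units.coeHom ℂ).comp ((MonoidAlgebra.lift ℂ ℂ G).symm φ).toHomUnits
        = (MonoidAlgebra.lift ℂ ℂ G).symm φ := by
      ext g
      rfl
    rw [h1, Equiv.apply_symm_apply]
    have h2 : Ideal.Quotient.mk M (p i) = 0 :=
      Ideal.Quotient.eq_zero_iff_mem.2 (hle (Ideal.subset_span ⟨i, rfl⟩))
    change e.symm (Ideal.Quotient.mk M (p i)) = 0
    rw [h2, map_zero]
  · rintro ⟨μ, hμ⟩ h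
    have hle : Ideal.span (Set.range p) ≤
        RingHom.ker ((MonoidAlgebra.lift ℂ ℂ G) ((Units.coeHom ℂ).comp μ)) := by
      rw [Ideal.span_le]
      rintro _ ⟨i, rfl⟩
      exact hμ i
    rw [h] at hle
    exact RingHom.ker_ne_top _ (top_le_iff.1 hle)
end

section
/- Let G be a finite abelian group, let R = ℂ[t^{±1}] be the ring of Laurent polynomials over ℂ, and identify R[G] (the group algebra of G over R) with the ring ℂ[G][t^{±1}] of Laurent polynomials over ℂ[G]. Let S ⊆ R[G] be the multiplicative set of nonzero Laurent polynomials whose leading coefficient equals z·g for some z ∈ ℂ \ {0} and g ∈ G. For elements p₁, …, p_k ∈ R[G], the ideal of the localization (R[G])_S generated by the images of p₁, …, p_k is a proper ideal if and only if there exists a group homomorphism μ : G → ℂˣ such that μ̂(p_i) = 0 for all i = 1, …, k, where μ̂ : R[G] → R is the R-algebra homomorphism induced by μ (sending each group element g ∈ G to μ(g) ∈ ℂ ⊆ R). -/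
open LaurentPolynomial

/-- The multiplicative set `S` of nonzero Laurent polynomials over the group
algebra `ℂ[G]` whose leading coefficient (the coefficient of the highest
occurring power of `t`) is of the form `z • g` with `z ∈ ℂ \ {0}`, `g ∈ G`. -/
def leadingGroupLike (𝔽 G : Type*) [Field 𝔽] [Group G] :
    Set (LaurentPolynomial (MonoidAlgebra 𝔽 G)) :=
  {p | ∃ (n : ℤ) (z : 𝔽) (g : G), z ≠ 0 ∧
        p.coeff n = MonoidAlgebra.single g z ∧ ∀ m : ℤ, n < m → p.coeff m = 0}

/-- The map `μ̂ : R[G] → R` (with `R = ℂ[t^{±1}]` and `R[G]` identified with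
`ℂ[G][t^{±1}]`) induced by a homomorphism `μ : G → ℂˣ`: it applies, to each
coefficient of a Laurent polynomial over `ℂ[G]`, the `ℂ`-algebra
homomorphism `ℂ[G] → ℂ` extending `μ` (i.e. it sends each group element
`g ∈ G` to `μ(g) ∈ ℂ ⊆ R`). -/
noncomputable def inducedCharacterMap {G : Type*} [CommGroup G] (μ : G →* ℂˣ) :
    LaurentPolynomial (MonoidAlgebra ℂ G) → LaurentPolynomial ℂ :=
  fun x => .ofCoeff <| Finsupp.mapRange
    ((MonoidAlgebra.lift ℂ ℂ G) ((Units.coeHom ℂ).comp μ)) (map_zero _) x.coeff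

lemma aux_root {K : Type*} [Field K] (c : ℂ →+* K) (x : K) (n : ℕ) (hn : 0 < n) (hx : x ^ n = 1) :
    ∃ z : ℂ, c z = x := by
  let _ : Algebra ℂ K := c.toAlgebra
  have hi : IsIntegral ℂ x := by
    refine IsIntegral.of_pow hn ?_
    rw [hx]
    exact isIntegral_one
  have h := IsAlgClosed.degree_eq_one_of_irreducible ℂ (minpoly.irreducible hi)
  exact minpoly.mem_range_of_degree_eq_one ℂ x h

noncomputable abbrev charHom {G : Type*} [CommGroup G] (μ : G →* ℂˣ) : MonoidAlgebra ℂ G →+* ℂ :=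
  ((MonoidAlgebra.lift ℂ ℂ G) ((Units.coeHom ℂ).comp μ)).toRingHom

lemma charHom_single {G : Type*} [CommGroup G] (μ : G →* ℂˣ) (g : G) (z : ℂ) :
    charHom μ (MonoidAlgebra.single g z) = z * (μ g : ℂ) := by
  simp [charHom, MonoidAlgebra.lift_single]

lemma induced_eq {G : Type*} [CommGroup G] (μ : G →* ℂˣ)
    (x : LaurentPolynomial (MonoidAlgebra ℂ G)) :
    inducedCharacterMap μ x = AddMonoidAlgebra.mapRingHom ℤ (charHom μ) x := by
  ext n
  rw [AddMonoidAlgebra.coeff_mapRingHom]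
  rfl

lemma aux_char {G K : Type*} [CommGroup G] [Finite G] [Field K]
    (φ : LaurentPolynomial (MonoidAlgebra ℂ G) →+* K) :
    ∃ μ : G →* ℂˣ, ∀ x, φ x = φ (AddMonoidAlgebra.mapRingHom ℤ
      (algebraMap ℂ (MonoidAlgebra ℂ G)) (inducedCharacterMap μ x)) := by
  let ψ : MonoidAlgebra ℂ G →+* K := φ.comp LaurentPolynomial.C
  let c : ℂ →+* K := ψ.comp (algebraMap ℂ _)
  have hex : ∀ g : G, ∃ z : ℂ, c z = ψ (MonoidAlgebra.of ℂ G g) := by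
    intro g
    refine aux_root c _ (Nat.card G) Nat.card_pos ?_
    rw [← map_pow, ← map_pow, pow_card_eq_one', map_one, map_one]
  choose f hf using hex
  have cinj : Function.Injective c := c.injective
  let m : G →* ℂ :=
    { toFun := f
      map_one' := cinj (by rw [hf, map_one, map_one, map_one])
      map_mul' := fun a b => cinj (by rw [hf, map_mul, map_mul, map_mul, hf, hf]) }
  refine ⟨m.toHomUnits, ?_⟩
  have hψ : ∀ a, ψ a = ψ (algebraMap ℂ _ (charHom m.toHomUnits a)) := by
    intro a
    have : ψ = c.comp (charHom m.toHomUnits) := by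
      apply MonoidAlgebra.ringHom_ext
      · intro r
        change _ = c (charHom _ _)
        rw [charHom_single, map_one, Units.val_one, mul_one]
        rfl
      · intro g
        change _ = c (charHom _ _)
        rw [charHom_single, one_mul]
        exact (hf g).symm
    exact congrArg (fun h => h a) this
  intro x
  rw [induced_eq]
  induction x using LaurentPolynomial.induction_on' with
  | add p q hp hq => rw [map_add, hp, hq, map_add, map_add, map_add]
  | C_mul_T n a =>
    rw [← LaurentPolynomial.single_eq_C_mul_T, AddMonoidAlgebra.mapRingHom_single,
      AddMonoidAlgebra.mapRingHom_single, LaurentPolynomial.single_eq_C_mul_T,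
      LaurentPolynomial.single_eq_C_mul_T, map_mul, map_mul]
    congr 1
    exact hψ a

lemma aux_mem {G : Type*} [CommGroup G] (q : LaurentPolynomial ℂ) (hq : q ≠ 0) :
    AddMonoidAlgebra.mapRingHom ℤ (algebraMap ℂ (MonoidAlgebra ℂ G)) q ∈ leadingGroupLike ℂ G := by
  have hne : q.coeff.support.Nonempty := by
    rw [Finsupp.support_nonempty_iff]
    intro h
    exact hq (LaurentPolynomial.ext fun a => by rw [h]; rfl)
  refine ⟨q.coeff.support.max' hne, q.coeff (q.coeff.support.max' hne), 1, ?_, ?_, ?_⟩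
  · exact Finsupp.mem_support_iff.mp (Finset.max'_mem _ hne)
  · rw [AddMonoidAlgebra.coeff_mapRingHom]
    rfl
  · intro m hm
    rw [AddMonoidAlgebra.coeff_mapRingHom]
    have : q.coeff m = 0 := by
      by_contra h
      exact absurd (Finset.le_max' _ m (Finsupp.mem_support_iff.mpr h)) (not_le.mpr hm)
    rw [this, map_zero]

lemma aux_ne {G : Type*} [CommGroup G] (μ : G →* ℂˣ) (s : LaurentPolynomial (MonoidAlgebra ℂ G))
    (hs : s ∈ leadingGroupLike ℂ G) : AddMonoidAlgebra.mapRingHom ℤ (charHom μ) s ≠ 0 := by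
  obtain ⟨n, z, g, hz, hn, -⟩ := hs
  intro h
  have h2 : (AddMonoidAlgebra.mapRingHom ℤ (charHom μ) s).coeff n = 0 := by rw [h]; rfl
  rw [AddMonoidAlgebra.coeff_mapRingHom, hn, charHom_single] at h2
  exact mul_ne_zero hz (μ g).ne_zero h2

/-- Let `G` be a finite abelian group, `R = ℂ[t^{±1}]`, and
identify `R[G]` with `ℂ[G][t^{±1}]`.  Let `S` be the multiplicative set of
nonzero Laurent polynomials whose leading coefficient is `z·g`, `z ≠ 0`,
`g ∈ G`.  For `p₁, …, p_k ∈ R[G]`, the ideal of the localization `(R[G])_S`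
generated by the images of the `pᵢ` is proper if and only if there is a
homomorphism `μ : G → ℂˣ` with `μ̂(pᵢ) = 0` for all `i`, where
`μ̂ : R[G] → R` is induced by `μ`. -/
theorem stmt3 {G : Type*} [CommGroup G] [Finite G] (k : ℕ)
    (p : Fin k → LaurentPolynomial (MonoidAlgebra ℂ G)) :
    Ideal.span (Set.range fun i =>
        algebraMap (LaurentPolynomial (MonoidAlgebra ℂ G))
          (Localization (Submonoid.closure (leadingGroupLike ℂ G))) (p i)) ≠ ⊤ ↔
      ∃ μ : G →* ℂˣ, ∀ i : Fin k, inducedCharacterMap μ (p i) = 0 := by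
  constructor
  · intro h
    obtain ⟨M, hM, hle⟩ := Ideal.exists_le_maximal _ h
    let _ : Field (Localization (Submonoid.closure (leadingGroupLike ℂ G)) ⧸ M) :=
      Ideal.Quotient.field M
    let φ := (Ideal.Quotient.mk M).comp (algebraMap (LaurentPolynomial (MonoidAlgebra ℂ G))
          (Localization (Submonoid.closure (leadingGroupLike ℂ G))))
    obtain ⟨μ, hμ⟩ := aux_char φ
    refine ⟨μ, fun i => ?_⟩
    by_contra hne
    have h0 : φ (p i) = 0 :=
      Ideal.Quotient.eq_zero_iff_mem.mpr (hle (Ideal.subset_span ⟨i, rfl⟩))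
    rw [hμ] at h0
    have hu := (IsLocalization.map_units
      (Localization (Submonoid.closure (leadingGroupLike ℂ G)))
      (⟨_, Submonoid.subset_closure (aux_mem (G := G) _ hne)⟩ :
        Submonoid.closure (leadingGroupLike ℂ G))).map (Ideal.Quotient.mk M)
    exact hu.ne_zero h0
  · rintro ⟨μ, hμ⟩ htop
    let F := FractionRing (LaurentPolynomial ℂ)
    let φ : LaurentPolynomial (MonoidAlgebra ℂ G) →+* F :=
      (algebraMap (LaurentPolynomial ℂ) F).comp (AddMonoidAlgebra.mapRingHom ℤ (charHom μ))
    have hφ : ∀ y : Submonoid.closure (leadingGroupLike ℂ G), IsUnit (φ y) := by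
      rintro ⟨y, hy⟩
      have hle : Submonoid.closure (leadingGroupLike ℂ G) ≤ (IsUnit.submonoid F).comap φ := by
        rw [Submonoid.closure_le]
        intro s hs
        refine isUnit_iff_ne_zero.mpr fun h0 => aux_ne μ s hs ?_
        exact (IsFractionRing.injective (LaurentPolynomial ℂ) F) (by rw [map_zero]; exact h0)
      exact hle hy
    let L : Localization (Submonoid.closure (leadingGroupLike ℂ G)) →+* F :=
      IsLocalization.lift hφ
    have hker : Ideal.span (Set.range fun i =>
        algebraMap (LaurentPolynomial (MonoidAlgebra ℂ G))
          (Localization (Submonoid.closure (leadingGroupLike ℂ G))) (p i)) ≤ RingHom.ker L := by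
      rw [Ideal.span_le]
      rintro _ ⟨i, rfl⟩
      change L _ = 0
      rw [IsLocalization.lift_eq hφ]
      change algebraMap (LaurentPolynomial ℂ) F
        (AddMonoidAlgebra.mapRingHom ℤ (charHom μ) (p i)) = 0
      rw [← induced_eq, hμ, map_zero]
    rw [htop] at hker
    have h1 : L 1 = 0 := hker (Submodule.mem_top)
    rw [map_one] at h1
    exact one_ne_zero h1
end

section
/- Let Γ be a balanced graph with no closed paths of odd length, equipped with an n-balanced colouring, and let e₁ ≠ e₂ be two edges of the same colour lying in the same equivalence class. Then the parity of the pair (e₁, e₂) is well defined: for a fixed simple cycle P containing both e₁ and e₂, the two arcs of P between e₁ and e₂ yield the same value (−1)^l (where l is the number of edges of that arc strictly between e₁ and e₂), and for any two simple cycles P and Q each containing both e₁ and e₂, parity_P(e₁, e₂) = parity_Q(e₁, e₂). -/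
/-!  We work with finite graphs that are not necessarily simplicial
(multiple edges between two vertices are allowed): a graph is given by a
vertex type `V`, an edge type `E`, and an endpoint map `ends : E → Sym2 V`.
Edges carry labels `l e` which are even integers `≥ 4`, and colours
`C e ∈ {1, …, n}` (modelled as `Fin n`). -/

/-- A walk of length `m` in the graph with endpoint map `ends : E → Sym2 V`:
a sequence of `m + 1` vertices together with `m` edges, the `i`-th edge
having the `i`-th and `(i+1)`-st vertices as its endpoints. -/
structure GraphWalk {V E : Type*} (ends : E → Sym2 V) (m : ℕ) where
  vert : Fin (m + 1) → V
  edge : Fin m → E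
  ends_eq : ∀ i : Fin m, ends (edge i) = s(vert i.castSucc, vert i.succ)

/-- A walk is closed if it starts and ends at the same vertex. -/
def GraphWalk.IsClosed {V E : Type*} {ends : E → Sym2 V} {m : ℕ}
    (w : GraphWalk ends m) : Prop :=
  w.vert 0 = w.vert (Fin.last m)

/-- A simple cycle: a nontrivial closed walk with pairwise distinct edges
and pairwise distinct vertices (apart from the repeated initial vertex). -/
def GraphWalk.IsSimpleCycle {V E : Type*} {ends : E → Sym2 V} {m : ℕ}
    (w : GraphWalk ends m) : Prop :=
  0 < m ∧ w.IsClosed ∧ Function.Injective w.edge ∧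
    Function.Injective fun i : Fin m => w.vert i.castSucc

/-- A minimal simple cycle: a simple cycle whose edge set does not strictly
contain the edge set of any other simple cycle. -/
def GraphWalk.IsMinimalCycle {V E : Type*} {ends : E → Sym2 V} {m : ℕ}
    (w : GraphWalk ends m) : Prop :=
  w.IsSimpleCycle ∧ ∀ (m' : ℕ) (w' : GraphWalk ends m'), w'.IsSimpleCycle →
    Set.range w'.edge ⊆ Set.range w.edge → Set.range w'.edge = Set.range w.edge

/-- The relation `∼` on edges of colour `i`: `e ∼ f` iff there is a finite
sequence of minimal simple cycles `P₀, …, P_m` with `e ∈ P₀`, `f ∈ P_m`,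
and consecutive cycles sharing at least one edge of colour `i`. -/
def SameCycleClass {V E : Type*} (ends : E → Sym2 V) {n : ℕ} (C : E → Fin n)
    (i : Fin n) (e f : E) : Prop :=
  ∃ (m : ℕ) (len : Fin (m + 1) → ℕ)
    (cyc : (k : Fin (m + 1)) → GraphWalk ends (len k)),
      (∀ k, (cyc k).IsMinimalCycle) ∧
      e ∈ Set.range (cyc 0).edge ∧ f ∈ Set.range (cyc (Fin.last m)).edge ∧
      ∀ k : Fin m, ∃ g : E, C g = i ∧ g ∈ Set.range (cyc k.castSucc).edge ∧
        g ∈ Set.range (cyc k.succ).edge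

theorem exists_potential_aux {V E : Type*} [Finite E] (ends : E → Sym2 V) (w : E → ZMod 2)
    (hw : ∀ (m : ℕ) (c : GraphWalk ends m), c.IsSimpleCycle → ∑ j, w (c.edge j) = 0)
    (S : Finset E) :
    ∃ φ : V → ZMod 2, ∀ e ∈ S, ∀ x y, ends e = s(x, y) → φ x + φ y = w e := by
  classical
  have two : ∀ a : ZMod 2, a + a = 0 := by decide
  induction S using Finset.induction_on with
  | empty => exact ⟨fun _ => 0, by simp⟩
  | insert e S heS ih =>
    obtain ⟨φ, hφ⟩ := ih
    obtain ⟨u, v, huv⟩ : ∃ u v, ends e = s(u, v) := by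
      induction h : ends e using Sym2.ind with
      | _ x y => exact ⟨x, y, rfl⟩
    let G : SimpleGraph V :=
      { Adj := fun x y => x ≠ y ∧ ∃ f ∈ S, ends f = s(x, y)
        symm := ⟨fun x y h => ⟨h.1.symm, by
          obtain ⟨f, hf, h2⟩ := h.2
          exact ⟨f, hf, by rw [h2, Sym2.eq_swap]⟩⟩⟩
        loopless := ⟨fun x h => h.1 rfl⟩ }
    by_cases hr : G.Reachable u v
    · -- the new edge closes a simple cycle
      obtain ⟨p, hp⟩ := hr.exists_isPath
      have hadj : ∀ k : ℕ, k < p.length → ∃ f ∈ S, ends f = s(p.getVert k, p.getVert (k+1)) :=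
        fun k hk => (p.adj_getVert_succ hk).2
      have : Nonempty E := ⟨e⟩
      choose! g hgS hg using hadj
      have hinj : ∀ i j : ℕ, i ≤ p.length → j ≤ p.length → p.getVert i = p.getVert j → i = j :=
        fun i j hi hj h => hp.getVert_injOn hi hj h
      let c : GraphWalk ends (p.length + 1) :=
        { vert := fun k => if (k : ℕ) ≤ p.length then p.getVert k else u
          edge := fun k => if (k : ℕ) < p.length then g k else e
          ends_eq := by
            intro k
            have hk := k.isLt
            by_cases h : (k : ℕ) < p.length
            · have h1 : (k : ℕ) ≤ p.length := h.le
              have h2 : (k : ℕ) + 1 ≤ p.length := h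
              simp [h, h1, h2, hg k h]
            · have h1 : (k : ℕ) = p.length := by omega
              simp [h1, huv, Sym2.eq_swap] }
      have hc : c.IsSimpleCycle := by
        refine ⟨Nat.succ_pos _, ?_, ?_, ?_⟩
        · simp [GraphWalk.IsClosed, c]
        · intro i j hij
          have hi := i.isLt
          have hj := j.isLt
          simp only [c] at hij
          apply Fin.ext
          split_ifs at hij with h1 h2 h2
          · have := (hg i h1).symm.trans ((congrArg ends hij).trans (hg j h2))
            rw [Sym2.eq_iff] at this
            rcases this with ⟨h, _⟩ | ⟨h, h'⟩
            · exact hinj _ _ (by omega) (by omega) h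
            · have a1 := hinj _ _ (by omega) (by omega) h
              have a2 := hinj _ _ (by omega) (by omega) h'
              omega
          · exact absurd (hij ▸ hgS i h1) heS
          · exact absurd (hij ▸ hgS j h2) heS
          · omega
        · intro i j hij
          have hi := i.isLt
          have hj := j.isLt
          have h1 : (i : ℕ) ≤ p.length := by omega
          have h2 : (j : ℕ) ≤ p.length := by omega
          simp only [c, Fin.val_castSucc, h1, h2, if_true] at hij
          exact Fin.ext (hinj _ _ h1 h2 hij)
      have hsum := hw _ c hc
      have htel : ∀ k : ℕ, k ≤ p.length →
          ∑ j ∈ Finset.range k, w (g j) = φ u + φ (p.getVert k) := by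
        intro k
        induction k with
        | zero => intro _; simp [two]
        | succ k ihk =>
          intro hk
          rw [Finset.sum_range_succ, ihk (by omega), ← hφ _ (hgS k hk) _ _ (hg k hk)]
          linear_combination two (φ (p.getVert k))
      have hwe : φ u + φ v = w e := by
        rw [Fin.sum_univ_castSucc] at hsum
        simp only [c, Fin.val_castSucc, Fin.is_lt, if_true, Fin.val_last, lt_irrefl, if_false]
          at hsum
        rw [Fin.sum_univ_eq_sum_range (fun j => w (g j)), htel _ le_rfl, p.getVert_length] at hsum
        linear_combination hsum - two (w e)
      refine ⟨φ, ?_⟩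
      intro f hf x y hxy
      rcases Finset.mem_insert.1 hf with rfl | hf
      · rw [huv, Sym2.eq_iff] at hxy
        rcases hxy with ⟨rfl, rfl⟩ | ⟨rfl, rfl⟩
        · exact hwe
        · rw [add_comm]; exact hwe
      · exact hφ f hf x y hxy
    · let ψ : V → ZMod 2 := fun x => if G.Reachable u x then φ x + (φ u + φ v + w e) else φ x
      have hu : ψ u = φ u + (φ u + φ v + w e) := if_pos (SimpleGraph.Reachable.refl u)
      have hv : ψ v = φ v := if_neg hr
      have huv' : ψ u + ψ v = w e := by
        rw [hu, hv]
        linear_combination two (φ u) + two (φ v)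
      refine ⟨ψ, ?_⟩
      intro f hf x y hxy
      rcases Finset.mem_insert.1 hf with rfl | hf
      · rw [huv, Sym2.eq_iff] at hxy
        rcases hxy with ⟨rfl, rfl⟩ | ⟨rfl, rfl⟩
        · exact huv'
        · rw [add_comm]; exact huv'
      · have h0 := hφ f hf x y hxy
        have hiff : G.Reachable u x ↔ G.Reachable u y := by
          by_cases hxy' : x = y
          · rw [hxy']
          · have ha : G.Adj x y := ⟨hxy', f, hf, hxy⟩
            exact ⟨fun h => h.trans ha.reachable, fun h => h.trans ha.symm.reachable⟩
        by_cases hx : G.Reachable u x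
        · have hy := hiff.1 hx
          simp only [ψ, hx, hy, if_true]
          linear_combination h0 + two (φ u + φ v + w e)
        · have hy : ¬ G.Reachable u y := fun h => hx (hiff.2 h)
          simp only [ψ, hx, hy, if_false]
          exact h0

theorem exists_potential {V E : Type*} [Finite E] (ends : E → Sym2 V) (w : E → ZMod 2)
    (hw : ∀ (m : ℕ) (c : GraphWalk ends m), c.IsSimpleCycle → ∑ j, w (c.edge j) = 0) :
    ∃ φ : V → ZMod 2, ∀ e x y, ends e = s(x, y) → φ x + φ y = w e := by
  have := Fintype.ofFinite E
  obtain ⟨φ, h⟩ := exists_potential_aux ends w hw Finset.univ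
  exact ⟨φ, fun e => h e (Finset.mem_univ e)⟩

/-- Potential along an arc all of whose edges have weight one. -/
theorem arc_potential {V E : Type*} {ends : E → Sym2 V} {m : ℕ} (P : GraphWalk ends m)
    (w : E → ZMod 2) (φ : V → ZMod 2) (hφ : ∀ e x y, ends e = s(x, y) → φ x + φ y = w e)
    (a b : Fin m) (hab : a < b) (h : ∀ j, a < j → j < b → w (P.edge j) = 1) :
    ((b.val - a.val - 1 : ℕ) : ZMod 2) = φ (P.vert a.succ) + φ (P.vert b.castSucc) := by
  have two : ∀ a : ZMod 2, a + a = 0 := by decide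
  have key : ∀ k : ℕ, ∀ hk : a.val + 1 + k ≤ b.val,
      ((k : ℕ) : ZMod 2) = φ (P.vert a.succ) + φ (P.vert ⟨a.val + 1 + k, by omega⟩) := by
    intro k
    induction k with
    | zero => intro _; exact (Nat.cast_zero).trans (two _).symm
    | succ k ih =>
      intro hk
      have h1 := ih (by omega)
      have hlt : a.val + 1 + k < m := by omega
      have h2 := hφ _ _ _ (P.ends_eq ⟨a.val + 1 + k, hlt⟩)
      rw [h ⟨a.val + 1 + k, hlt⟩ (by rw [Fin.lt_def]; simp; omega)
        (by rw [Fin.lt_def]; simp; omega)] at h2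
      have e1 : (Fin.castSucc ⟨a.val + 1 + k, hlt⟩ : Fin (m+1)) = ⟨a.val + 1 + k, by omega⟩ := rfl
      have e2 : (Fin.succ ⟨a.val + 1 + k, hlt⟩ : Fin (m+1)) = ⟨a.val + 1 + (k+1), by omega⟩ := rfl
      rw [e1, e2] at h2
      push_cast
      linear_combination h1 - h2 + two (φ (P.vert ⟨a.val + 1 + k, by omega⟩))
  have hab' : a.val < b.val := hab
  have := key (b.val - a.val - 1) (by omega)
  rw [this]
  congr 3
  apply Fin.ext
  simp
  omega

theorem neg_one_pow_eq_of_cast {a b : ℕ} (h : (a : ZMod 2) = b) : (-1 : ℤ) ^ a = (-1) ^ b := by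
  rw [ZMod.natCast_eq_natCast_iff] at h
  rw [neg_one_pow_eq_pow_mod_two, h, ← neg_one_pow_eq_pow_mod_two]

/-- Let `Γ` be a balanced graph with no closed paths of odd
length, equipped with an `n`-balanced colouring `C`, and let `e₁ ≠ e₂` be two
edges of the same colour lying in the same `∼`-equivalence class.  Then the
parity of the pair `(e₁, e₂)` is well defined: for a fixed simple cycle `P`
containing both edges (at positions `aP`, `bP`, so that the numbers of edges
strictly between `e₁` and `e₂` along the two arcs of `P` are
`(mP + bP - aP - 1) % mP` and `(mP + aP - bP - 1) % mP`), both arcs yield the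
same value `(-1)^l`, and any two simple cycles `P`, `Q` containing both
edges yield the same parity. -/
theorem stmt5 {V E : Type*} [Finite V] [Finite E]
    (ends : E → Sym2 V) (l : E → ℕ) (n : ℕ) (C : E → Fin n)
    -- the labels are even integers `≥ 4`
    (hlabel : ∀ e : E, 4 ≤ l e ∧ Even (l e))
    -- `C` is an `n`-balanced colouring
    (hcol : ∀ i : Fin n, ∃ p : ℕ, p.Prime ∧ ∀ e : E, C e = i → p ∣ l e / 2)
    -- no closed paths of odd length
    (hodd : ∀ (m : ℕ) (w : GraphWalk ends m), w.IsSimpleCycle → Even m)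
    -- `Γ` is balanced: every closed path of even length contains exactly two
    -- or zero edges of each colour
    (hbal : ∀ (m : ℕ) (w : GraphWalk ends m), w.IsSimpleCycle → Even m →
      ∀ i : Fin n,
        (Finset.univ.filter fun j : Fin m => C (w.edge j) = i).card = 0 ∨
        (Finset.univ.filter fun j : Fin m => C (w.edge j) = i).card = 2)
    (e₁ e₂ : E) (hne : e₁ ≠ e₂) (hcolor : C e₁ = C e₂)
    (hclass : SameCycleClass ends C (C e₁) e₁ e₂)
    {mP : ℕ} (P : GraphWalk ends mP) (hP : P.IsSimpleCycle)
    (aP bP : Fin mP) (haP : P.edge aP = e₁) (hbP : P.edge bP = e₂)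
    {mQ : ℕ} (Q : GraphWalk ends mQ) (hQ : Q.IsSimpleCycle)
    (aQ bQ : Fin mQ) (haQ : Q.edge aQ = e₁) (hbQ : Q.edge bQ = e₂) :
    ((-1 : ℤ) ^ ((mP + bP.val - aP.val - 1) % mP) =
        (-1 : ℤ) ^ ((mP + aP.val - bP.val - 1) % mP)) ∧
      ((-1 : ℤ) ^ ((mP + bP.val - aP.val - 1) % mP) =
        (-1 : ℤ) ^ ((mQ + bQ.val - aQ.val - 1) % mQ)) := by
  classical
  have two : ∀ a : ZMod 2, a + a = 0 := by decide
  have z2 : ((2 : ℕ) : ZMod 2) = 0 := by decide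
  let w : E → ZMod 2 := fun e => if C e = C e₁ then 0 else 1
  have hw : ∀ (m : ℕ) (c : GraphWalk ends m), c.IsSimpleCycle → ∑ j, w (c.edge j) = 0 := by
    intro m c hc
    have he := hodd m c hc
    have hb := hbal m c hc he (C e₁)
    have h1 : ∑ j, w (c.edge j) = ∑ j : Fin m, ((1 : ZMod 2) +
        if C (c.edge j) = C e₁ then 1 else 0) := by
      refine Finset.sum_congr rfl fun j _ => ?_
      simp only [w]
      split_ifs <;> decide
    rw [h1, Finset.sum_add_distrib, Finset.sum_boole]
    have h2 : (((Finset.univ.filter fun j : Fin m => C (c.edge j) = C e₁).card : ℕ) : ZMod 2)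
        = 0 := by
      rcases hb with hb | hb <;> rw [hb]
      · simp
      · exact z2
    rw [h2]
    obtain ⟨r, rfl⟩ := he
    simp [two]
  obtain ⟨φ, hφ⟩ := exists_potential ends w hw
  obtain ⟨x₁, y₁, hx₁⟩ : ∃ u v, ends e₁ = s(u, v) := by
    induction h : ends e₁ using Sym2.ind with
    | _ x y => exact ⟨x, y, rfl⟩
  obtain ⟨x₂, y₂, hx₂⟩ : ∃ u v, ends e₂ = s(u, v) := by
    induction h : ends e₂ using Sym2.ind with
    | _ x y => exact ⟨x, y, rfl⟩
  have eqz : ∀ a b : ZMod 2, a + b = 0 → a = b := by decide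
  have end1 : ∀ x y, ends e₁ = s(x, y) → φ x = φ x₁ ∧ φ y = φ x₁ := by
    intro x y h
    have h1 := eqz _ _ ((hφ _ _ _ h).trans (if_pos rfl))
    have h2 := eqz _ _ ((hφ _ _ _ hx₁).trans (if_pos rfl))
    rw [hx₁, Sym2.eq_iff] at h
    rcases h with ⟨rfl, rfl⟩ | ⟨rfl, rfl⟩ 
    · exact ⟨rfl, h1.symm⟩
    · exact ⟨h1, rfl⟩
  have end2 : ∀ x y, ends e₂ = s(x, y) → φ x = φ x₂ ∧ φ y = φ x₂ := by
    intro x y h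
    have h1 := eqz _ _ ((hφ _ _ _ h).trans (if_pos hcolor.symm))
    have h2 := eqz _ _ ((hφ _ _ _ hx₂).trans (if_pos hcolor.symm))
    rw [hx₂, Sym2.eq_iff] at h
    rcases h with ⟨rfl, rfl⟩ | ⟨rfl, rfl⟩ 
    · exact ⟨rfl, h1.symm⟩
    · exact ⟨h1, rfl⟩
  have key : ∀ (m : ℕ) (R : GraphWalk ends m), R.IsSimpleCycle → ∀ a b : Fin m,
      R.edge a = e₁ → R.edge b = e₂ →
      (((m + b.val - a.val - 1) % m : ℕ) : ZMod 2) = φ x₁ + φ x₂ ∧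
      (((m + a.val - b.val - 1) % m : ℕ) : ZMod 2) = φ x₁ + φ x₂ := by
    intro m R hR a b ha hb
    have hev := hodd m R hR
    have hab : a ≠ b := fun h => hne (by rw [← ha, ← hb, h])
    have hcard := hbal m R hR hev (C e₁)
    have hsub : ({a, b} : Finset (Fin m)) ⊆
        Finset.univ.filter fun j : Fin m => C (R.edge j) = C e₁ := by
      intro j hj
      rcases Finset.mem_insert.1 hj with rfl | hj
      · simp [ha]
      · rw [Finset.mem_singleton.1 hj]; simp [hb, hcolor]
    have hpair : ({a, b} : Finset (Fin m)).card = 2 := Finset.card_pair hab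
    have heq := Finset.eq_of_subset_of_card_le hsub (by rw [hpair]; omega)
    have hother : ∀ j, j ≠ a → j ≠ b → w (R.edge j) = 1 := by
      intro j h1 h2
      refine if_neg fun h => ?_
      have : j ∈ ({a, b} : Finset (Fin m)) := by rw [heq]; simp [h]
      simp [h1, h2] at this
    have ea := end1 _ _ (ha ▸ R.ends_eq a)
    have eb := end2 _ _ (hb ▸ R.ends_eq b)
    have fin : ∀ (s t d : ℕ), (d : ZMod 2) = φ x₁ + φ x₂ → s % 2 = d % 2 → t % 2 = d % 2 →
        ((s : ℕ) : ZMod 2) = φ x₁ + φ x₂ ∧ ((t : ℕ) : ZMod 2) = φ x₁ + φ x₂ := by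
      intro s t d hd hs ht
      exact ⟨((ZMod.natCast_eq_natCast_iff _ _ _).2 hs).trans hd,
        ((ZMod.natCast_eq_natCast_iff _ _ _).2 ht).trans hd⟩
    have hla := a.isLt
    have hlb := b.isLt
    obtain ⟨r, hr⟩ := hev
    rcases lt_or_gt_of_ne hab with hlt | hlt
    · have hlt' : a.val < b.val := hlt
      have := arc_potential R w φ hφ a b hlt
        (fun j h1 h2 => hother j h1.ne' h2.ne)
      rw [ea.2, eb.1] at this
      refine fin _ _ _ this ?_ ?_
      · rw [show m + b.val - a.val - 1 = (b.val - a.val - 1) + m by omega, Nat.add_mod_right,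
          Nat.mod_eq_of_lt (by omega : b.val - a.val - 1 < m)]
      · rw [Nat.mod_eq_of_lt (by omega : m + a.val - b.val - 1 < m)]
        omega
    · have hlt' : b.val < a.val := hlt
      have := arc_potential R w φ hφ b a hlt
        (fun j h1 h2 => hother j h2.ne h1.ne')
      rw [eb.2, ea.1, add_comm] at this
      refine fin _ _ _ this ?_ ?_
      · rw [Nat.mod_eq_of_lt (by omega : m + b.val - a.val - 1 < m)]
        omega
      · rw [show m + a.val - b.val - 1 = (a.val - b.val - 1) + m by omega, Nat.add_mod_right,
          Nat.mod_eq_of_lt (by omega : a.val - b.val - 1 < m)]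
  have kP := key mP P hP aP bP haP hbP
  have kQ := key mQ Q hQ aQ bQ haQ hbQ
  exact ⟨neg_one_pow_eq_of_cast (kP.1.trans kP.2.symm),
    neg_one_pow_eq_of_cast (kP.1.trans kQ.1.symm)⟩
end
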